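/- Let k be an algebraically closed field of characteristic ≠ 2 and let J be a two-dimensional Jordan algebra over k. Then J has a basis {a, b} whose multiplication table is one of the following six: (i) a² = a, b² = b, a·b = 0; (ii) a² = a, a·b = b, b² = 0; (iii) a² = a, a·b = (1/2)b, b² = 0; (iv) a² = b, a·b = 0, b² = 0; (v) a² = a, a·b = 0, b² = 0; (vi) a² = b² = a·b = 0. -/

import Mathlib

section aux
variable {k : Type*} [Field k] {J : Type*} [NonUnitalNonAssocCommRing J] [Module k J]
    [SMulCommClass k J J] [IsScalarTower k J J]

theorem aux_lin (hchar : (2 : k) ≠ 0)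
    (hJ : ∀ x y : J, ((x * x) * y) * x = (x * x) * (y * x)) (a z y : J) :
    ((a*z)*y)*a + ((a*z)*y)*a + ((a*a)*y)*z = (a*z)*(y*a) + (a*z)*(y*a) + (a*a)*(y*z) := by
  have h1 := hJ (a+z) y
  have h2 := hJ (a-z) y
  have h4 := hJ z y
  have key : (2:k) • (((a*z)*y)*a + ((a*z)*y)*a + ((a*a)*y)*z)
      = (2:k) • ((a*z)*(y*a) + (a*z)*(y*a) + (a*a)*(y*z)) := by
    simp only [mul_add, add_mul, mul_sub, sub_mul, mul_comm z a] at h1 h2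
    linear_combination (norm := module) (1:k) • h1 - (1:k) • h2 - (2:k) • h4
  exact smul_right_injective J hchar key

theorem aux_span (hdim : Module.finrank k J = 2) {a b : J}
    (h : LinearIndependent k ![a, b]) : Submodule.span k {a, b} = ⊤ := by
  have := h.span_eq_top_of_card_eq_finrank (by simp [hdim])
  rwa [Matrix.range_cons, Matrix.range_cons, Matrix.range_empty, Set.union_empty, Set.singleton_union] at this

theorem aux_exp (hdim : Module.finrank k J = 2) {a b : J}
    (h : LinearIndependent k ![a, b]) (x : J) : ∃ p q : k, x = p • a + q • b := by
  have : x ∈ Submodule.span k {a, b} := by rw [aux_span hdim h]; trivial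
  obtain ⟨p, q, h⟩ := Submodule.mem_span_pair.1 this
  exact ⟨p, q, h.symm⟩

theorem aux_coef {a b : J} (h : LinearIndependent k ![a, b]) {p q : k}
    (e : p • a + q • b = 0) : p = 0 ∧ q = 0 := LinearIndependent.pair_iff.1 h p q e

/-- the conclusion -/
def auxConc (k : Type*) [Field k] (J : Type*) [NonUnitalNonAssocCommRing J] [Module k J] : Prop :=
    ∃ a b : J, LinearIndependent k ![a, b] ∧
      ((a * a = a ∧ b * b = b ∧ a * b = 0) ∨
       (a * a = a ∧ a * b = b ∧ b * b = 0) ∨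
       (a * a = a ∧ a * b = (2⁻¹ : k) • b ∧ b * b = 0) ∨
       (a * a = b ∧ a * b = 0 ∧ b * b = 0) ∨
       (a * a = a ∧ a * b = 0 ∧ b * b = 0) ∨
       (a * a = 0 ∧ b * b = 0 ∧ a * b = 0))

theorem aux_ex (hdim : Module.finrank k J = 2) {a : J} (ha : a ≠ 0) :
    ∃ b, LinearIndependent k ![a, b] := by
  have : Nontrivial J := ⟨a, 0, ha⟩
  obtain ⟨b, hb⟩ := exists_linearIndependent_pair_of_one_lt_finrank (R := k) (by omega) ha
  exact ⟨b, hb⟩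

theorem aux_eig (hchar : (2 : k) ≠ 0) [IsAlgClosed k]
    (hJ : ∀ x y : J, ((x * x) * y) * x = (x * x) * (y * x))
    (hdim : Module.finrank k J = 2) {a b : J} (h : LinearIndependent k ![a, b])
    (haa : a * a = a) {q : k} (hab : a * b = q • b) 
    (hq : q * (2 * q - 1) * (q - 1) = 0) : auxConc k J := by
  have hba : b * a = q • b := by rw [mul_comm, hab]
  obtain ⟨r, s, hbb⟩ := aux_exp hdim h (b * b)
  rcases mul_eq_zero.1 hq with hq | hq
  · rcases mul_eq_zero.1 hq with hq | hq
    · subst hq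
      rw [zero_smul] at hab hba
      have e := aux_lin hchar hJ a b b
      simp [haa, hab, hba, hbb, mul_add, mul_smul_comm] at e
      have ha : a ≠ 0 := h.ne_zero 0
      have hr : r = 0 := (smul_eq_zero.1 (by first | exact e | exact e.symm | exact smul_eq_zero.2 e)).resolve_right ha
      subst hr
      by_cases hs : s = 0
      · subst hs
        exact ⟨a, b, h, by simp [haa, hab, hbb]⟩
      · refine ⟨a, s⁻¹ • b, ?_, Or.inl ⟨haa, ?_, ?_⟩⟩
        · rw [LinearIndependent.pair_iff] at h ⊢
          intro u v e
          rw [smul_smul] at e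
          obtain ⟨h1, h2⟩ := h _ _ e
          exact ⟨h1, (mul_eq_zero.1 h2).resolve_right (inv_ne_zero hs)⟩
        · simp only [smul_mul_assoc, mul_smul_comm, hbb, zero_smul, zero_add, smul_smul]
          congr 1; field_simp
        · simp [mul_smul_comm, hab]
    · have hq : q = 2⁻¹ := by field_simp; linear_combination hq
      have e1 := aux_lin hchar hJ b a a
      have e2 := hJ b a
      simp only [haa, hab, hba, hbb, mul_add, add_mul, mul_smul_comm, smul_mul_assoc, smul_add, smul_smul] at e1 e2
      have e1' : (0:k) • a + (s * (q^2-q)) • b = 0 := by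
        linear_combination (norm := module) e1
      have e2' : (0:k) • a + (r * (q-q^2)) • b = 0 := by
        linear_combination (norm := module) e2
      have hqq : q^2 - q ≠ 0 := by
        have : q^2 - q = -(2⁻¹ * 2⁻¹) := by rw [hq]; field_simp; norm_num
        rw [this]; simp [hchar]
      have hs : s = 0 := (mul_eq_zero.1 (aux_coef h e1').2).resolve_right hqq
      have hr : r = 0 := by
        refine (mul_eq_zero.1 (aux_coef h e2').2).resolve_right fun h => hqq ?_
        linear_combination -h
      subst hs hr
      refine ⟨a, b, h, ?_⟩
      right; right; left
      exact ⟨haa, hq ▸ hab, by simpa using hbb⟩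
  · have hq : q = 1 := by linear_combination hq
    subst hq
    rw [one_smul] at hab hba
    obtain ⟨c, hc, hcc⟩ : ∃ c : J, LinearIndependent k ![a, c] ∧ a * c = c ∧ ∃ t : k, c * c = t • a := by
      refine ⟨b - (s/2) • a, ?_, ?_, r + s^2/4, ?_⟩
      · rw [LinearIndependent.pair_iff] at h ⊢
        intro u v e
        obtain ⟨h1, h2⟩ := h (u - v * (s/2)) v (by linear_combination (norm := module) e)
        simp_all
      · simp only [mul_sub, hab, haa, mul_smul_comm]
      · simp only [mul_sub, sub_mul, hab, hba, haa, mul_smul_comm, smul_mul_assoc, hbb]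
        have h4 : (4:k) ≠ 0 := by
          have : (4:k) = 2 * 2 := by norm_num
          rw [this]; exact mul_ne_zero hchar hchar
        match_scalars <;> field_simp <;> ring
    obtain ⟨hac, t, hcc⟩ := hcc
    have hca : c * a = c := by rw [mul_comm, hac]
    by_cases ht : t = 0
    · subst ht
      exact ⟨a, c, hc, by simp [haa, hac, hcc]⟩
    obtain ⟨d, hd⟩ := IsAlgClosed.exists_pow_nat_eq t (n := 2) (by norm_num)
    have hd0 : d ≠ 0 := by rintro rfl; simp at hd; exact ht hd.symm
    refine ⟨(2⁻¹:k) • a + (2⁻¹ * d⁻¹ : k) • c, (2⁻¹:k) • a - (2⁻¹ * d⁻¹ : k) • c, ?_, Or.inl ⟨?_, ?_, ?_⟩⟩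
    · rw [LinearIndependent.pair_iff] at hc ⊢
      intro u v e
      obtain ⟨h1, h2⟩ := hc ((u + v) * 2⁻¹) ((u - v) * (2⁻¹ * d⁻¹)) (by linear_combination (norm := module) e)
      have h1 : u + v = 0 := by simpa [hchar] using h1
      have h2 : u - v = 0 := by simpa [hchar, hd0] using h2
      constructor
      · apply mul_left_cancel₀ hchar; linear_combination h1 + h2
      · apply mul_left_cancel₀ hchar; linear_combination h1 - h2
    all_goals
      simp only [mul_add, add_mul, mul_sub, sub_mul, hac, hca, haa, hcc, mul_smul_comm, smul_mul_assoc, ← hd]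
      match_scalars <;> field_simp <;> ring

theorem aux_idem (hchar : (2 : k) ≠ 0) [IsAlgClosed k]
    (hJ : ∀ x y : J, ((x * x) * y) * x = (x * x) * (y * x))
    (hdim : Module.finrank k J = 2) {a : J} (ha : a ≠ 0)
    (haa : a * a = a) : auxConc k J := by
  obtain ⟨b, h⟩ := aux_ex (k := k) hdim ha
  obtain ⟨p, q, hab⟩ := aux_exp hdim h (a * b)
  have hba : b * a = p • a + q • b := by rw [mul_comm, hab]
  have e := aux_lin hchar hJ a b a
  simp only [haa, hab, hba, mul_add, add_mul, mul_smul_comm, smul_mul_assoc] at e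
  have e' : (p * (2 * q^2 + q * 2 - q * 3)) • a + (q * (2 * q - 1) * (q - 1)) • b = 0 := by
    linear_combination (norm := module) e
  obtain ⟨e1, e2⟩ := aux_coef h e'
  by_cases hq : q = 1
  · subst hq
    have hp : p = 0 := by linear_combination e1
    subst hp
    exact aux_eig hchar hJ hdim h haa (by simpa using hab) e2
  · have hq' : q - 1 ≠ 0 := sub_ne_zero.2 hq
    refine aux_eig hchar hJ hdim (b := b + (p / (q-1)) • a) ?_ haa (q := q) ?_ e2
    · rw [LinearIndependent.pair_iff] at h ⊢
      intro u v e
      obtain ⟨h1, h2⟩ := h (u + v * (p/(q-1))) v (by linear_combination (norm := module) e)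
      simp_all
    · simp only [mul_add, hab, haa, mul_smul_comm]
      match_scalars <;> field_simp <;> ring

theorem aux_main (hchar : (2 : k) ≠ 0) [IsAlgClosed k]
    (hJ : ∀ x y : J, ((x * x) * y) * x = (x * x) * (y * x))
    (hdim : Module.finrank k J = 2) : auxConc k J := by
  by_cases hid : ∃ e : J, e ≠ 0 ∧ e * e = e
  · obtain ⟨e, h0, h1⟩ := hid
    exact aux_idem hchar hJ hdim h0 h1
  push Not at hid
  by_cases hz : ∀ x : J, x * x = 0
  · have : Nontrivial J := Module.nontrivial_of_finrank_pos (R := k) (by omega)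
    obtain ⟨a, ha⟩ := exists_ne (0 : J)
    obtain ⟨b, h⟩ := aux_ex (k := k) hdim ha
    refine ⟨a, b, h, ?_⟩
    have e := hz (a + b)
    rw [mul_add, add_mul, add_mul, hz, hz, mul_comm b a] at e
    have : (2:k) • (a * b) = 0 := by linear_combination (norm := module) (1:k) • e
    have : a * b = 0 := (smul_eq_zero.1 this).resolve_left hchar
    simp [hz, this]
  push Not at hz
  obtain ⟨a, ha⟩ := hz
  have ha0 : a ≠ 0 := by rintro rfl; simp at ha
  have h : LinearIndependent k ![a, a * a] := by
    rw [LinearIndependent.pair_iff' ha0]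
    intro c hc
    have hc0 : c ≠ 0 := by rintro rfl; simp at hc; exact ha hc.symm
    refine hid (c⁻¹ • a) (smul_ne_zero (inv_ne_zero hc0) ha0) ?_
    simp only [mul_smul_comm, smul_mul_assoc, ← hc, smul_smul]
    congr 1; field_simp
  obtain ⟨p, q, hab⟩ := aux_exp hdim h (a * (a * a))
  have hba : (a * a) * a = p • a + q • (a * a) := by rw [mul_comm, hab]
  have hbb : (a * a) * (a * a) = (p * q) • a + (p + q^2) • (a * a) := by
    rw [← hJ a a, hba]
    simp only [add_mul, smul_mul_assoc, hba]
    module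
  by_cases hp : p = 0
  · subst hp
    by_cases hq : q = 0
    · subst hq
      refine ⟨a, a * a, h, ?_⟩
      right; right; right; left
      simp_all
    · exfalso
      refine hid ((q^2)⁻¹ • (a * a)) (smul_ne_zero (by positivity) ha) ?_
      simp only [mul_smul_comm, smul_mul_assoc, hbb]
      match_scalars <;> field_simp <;> ring
  · exfalso
    refine hid (p⁻¹ • (a * a) - (p⁻¹ * q) • a) ?_ ?_
    · intro e
      have := aux_coef h (p := -(p⁻¹ * q)) (q := p⁻¹) (by linear_combination (norm := module) e)
      simp_all
    · simp only [mul_sub, sub_mul, mul_smul_comm, smul_mul_assoc, hbb, hab, hba]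
      match_scalars <;> field_simp <;> ring
end aux

/-- Let `k` be an algebraically closed field of characteristic ≠ 2 and `J` a
two-dimensional Jordan algebra over `k`. Then `J` has a basis `{a, b}` whose
multiplication table is one of the following six:
(i) `a² = a, b² = b, a·b = 0`; (ii) `a² = a, a·b = b, b² = 0`;
(iii) `a² = a, a·b = (1/2)b, b² = 0`; (iv) `a² = b, a·b = 0, b² = 0`;
(v) `a² = a, a·b = 0, b² = 0`; (vi) `a² = b² = a·b = 0`. -/
theorem two_dimensional_jordan_classification
    {k : Type*} [Field k] [IsAlgClosed k] (hchar : (2 : k) ≠ 0)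
    {J : Type*} [NonUnitalNonAssocCommRing J] [Module k J]
    [SMulCommClass k J J] [IsScalarTower k J J]
    (hJordan : ∀ x y : J, ((x * x) * y) * x = (x * x) * (y * x))
    (hdim : Module.finrank k J = 2) :
    ∃ a b : J, LinearIndependent k ![a, b] ∧ Submodule.span k {a, b} = ⊤ ∧
      ((a * a = a ∧ b * b = b ∧ a * b = 0) ∨
       (a * a = a ∧ a * b = b ∧ b * b = 0) ∨
       (a * a = a ∧ a * b = (2⁻¹ : k) • b ∧ b * b = 0) ∨
       (a * a = b ∧ a * b = 0 ∧ b * b = 0) ∨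
       (a * a = a ∧ a * b = 0 ∧ b * b = 0) ∨
       (a * a = 0 ∧ b * b = 0 ∧ a * b = 0)) := by
  obtain ⟨a, b, h, h'⟩ := aux_main hchar hJordan hdim
  exact ⟨a, b, h, aux_span hdim h, h'⟩
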